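/- Suppose 0 < ε < ε₀, f ∈ 𝔚_{ε₀}, and G : Ω_ε → ℝ is continuous, locally concave on Ω_ε, and satisfies the boundary condition G(u, u²) = f(u) for all u ∈ ℝ. Then for every bounded nondegenerate interval I and every φ ∈ BMO_ε(I), the function f∘φ is integrable on I and ⟨f∘φ⟩_I ≤ G(⟨φ⟩_I, ⟨φ²⟩_I). In particular, B_ε(x; f) ≤ G(x) for every x ∈ Ω_ε. -/

import Mathlib

open MeasureTheory Set Real

/-- The average of `φ` over the interval with endpoints `a`, `b`. -/
noncomputable def intAvg (φ : ℝ → ℝ) (a b : ℝ) : ℝ := (∫ t in a..b, φ t) / (b - a)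

/-- `φ` belongs to the ball of radius `ε` of (quadratic-norm) BMO on the interval `(l, r)`. -/
def memBMOe (ε l r : ℝ) (φ : ℝ → ℝ) : Prop :=
  IntegrableOn φ (Ioo l r) ∧
  IntegrableOn (fun t => (φ t) ^ 2) (Ioo l r) ∧
  ∀ c d : ℝ, l ≤ c → c < d → d ≤ r →
    intAvg (fun t => (φ t) ^ 2) c d - (intAvg φ c d) ^ 2 ≤ ε ^ 2

/-- The Bellman function, computed with the interval `I = (0,1)`. -/
noncomputable def bellmanFn (ε : ℝ) (f : ℝ → ℝ) (x₁ x₂ : ℝ) : ℝ :=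
  sSup {y | ∃ φ : ℝ → ℝ, memBMOe ε 0 1 φ ∧
    IntegrableOn (fun t => f (φ t)) (Ioo 0 1) ∧
    intAvg φ 0 1 = x₁ ∧ intAvg (fun t => (φ t) ^ 2) 0 1 = x₂ ∧
    y = intAvg (fun t => f (φ t)) 0 1}

/-- The parabolic strip `Ω_ε`. -/
def parabStrip (ε : ℝ) : Set (ℝ × ℝ) := {x | x.1 ^ 2 ≤ x.2 ∧ x.2 ≤ x.1 ^ 2 + ε ^ 2}

/-- Local concavity on a subset of the plane. -/
def LocallyConcaveOn (Ω : Set (ℝ × ℝ)) (G : ℝ × ℝ → ℝ) : Prop :=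
  ∀ x y : ℝ × ℝ, x ∈ Ω → y ∈ Ω → segment ℝ x y ⊆ Ω →
    ∀ α β : ℝ, 0 ≤ α → 0 ≤ β → α + β = 1 →
      α * G x + β * G y ≤ G (α • x + β • y)

/-- The class `𝔚_{ε₀}`. -/
def memWcl (ε₀ : ℝ) (f f3 : ℝ → ℝ) : Prop :=
  ContDiff ℝ 2 f ∧
  (∀ x y : ℝ, x ≤ y → deriv (deriv f) y - deriv (deriv f) x = ∫ t in x..y, f3 t) ∧
  Integrable (fun t => f t * Real.exp (-|t| / ε₀)) ∧
  Integrable (fun t => deriv f t * Real.exp (-|t| / ε₀)) ∧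
  Integrable (fun t => deriv (deriv f) t * Real.exp (-|t| / ε₀)) ∧
  Integrable (fun t => f3 t * Real.exp (-|t| / ε₀))

/-!
The proof is a Bellman induction. Let `φ` have BMO norm strictly below `ε`. Every interval can be
cut at a point balancing (length of the piece) × (tangent distance of its Bellman point
`(⟨φ⟩_J, ⟨φ²⟩_J)`), and then the segment joining the Bellman points of the two pieces stays in
`Ω_ε`. Local concavity thus makes `∑ |J| G(⟨φ⟩_J, ⟨φ²⟩_J)` decrease under successive cuts, while
the lengths shrink geometrically. For bounded `φ`, Lebesgue differentiation and dominated
convergence turn the sums into `∫ G(φ, φ²) = ∫ f ∘ φ`.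

A general `φ` in `BMO_ε` is approximated by truncations contracted by `n / (n + 1)`, which have norm
strictly below `ε`. The bounded case applied to an explicit locally concave majorant of a multiple
of `exp` gives the integral John-Nirenberg inequality; hence `exp (|φ| / ε₀)` is integrable for
`ε < ε₀`, and it dominates `f ∘ φ` and all the approximations.
-/

open Filter
open scoped NNReal Topology

section ParabolicStrip

/-- The height of a point of the plane above the parabola `x₂ = x₁²`; at a pair of averages
`(⟨φ⟩, ⟨φ²⟩)` it is the variance. -/
def height (x : ℝ × ℝ) : ℝ := x.2 - x.1 ^ 2

/-- The horizontal distance from `x` to the tangency points of the two tangents drawn from `x` to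
the upper boundary parabola of `Ω_ε`; those points have abscissas `x.1 ± tangentDist ε x`. The
value is junk above that parabola, where the radicand is negative. -/
noncomputable def tangentDist (ε : ℝ) (x : ℝ × ℝ) : ℝ := √(ε ^ 2 - height x)

variable {ε ε' α β : ℝ} {x y : ℝ × ℝ}

lemma mem_parabStrip_iff : x ∈ parabStrip ε ↔ 0 ≤ height x ∧ height x ≤ ε ^ 2 := by
  simp only [parabStrip, mem_ofPred_eq, height, sub_nonneg, sub_le_iff_le_add, add_comm]

lemma parabStrip_subset (h : ε' ^ 2 ≤ ε ^ 2) : parabStrip ε' ⊆ parabStrip ε :=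
  fun _ hx => ⟨hx.1, hx.2.trans (by gcongr)⟩

lemma mk_sq_mem_parabStrip (ε u : ℝ) : (u, u ^ 2) ∈ parabStrip ε :=
  ⟨le_rfl, le_add_of_nonneg_right (sq_nonneg ε)⟩

lemma continuous_of_eq_on_parabola {G : ℝ × ℝ → ℝ} {f : ℝ → ℝ}
    (hG : ContinuousOn G (parabStrip ε)) (hGbd : ∀ u, G (u, u ^ 2) = f u) : Continuous f := by
  rw [← funext hGbd]
  exact hG.comp_continuous (by fun_prop) (mk_sq_mem_parabStrip ε)

lemma isClosed_parabStrip (ε : ℝ) : IsClosed (parabStrip ε) := by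
  have hinter : parabStrip ε = {x | x.1 ^ 2 ≤ x.2} ∩ {x | x.2 ≤ x.1 ^ 2 + ε ^ 2} := rfl
  rw [hinter]
  exact (isClosed_le (by fun_prop) (by fun_prop)).inter (isClosed_le (by fun_prop) (by fun_prop))

lemma exists_abs_le_of_continuousOn_parabStrip {G : ℝ × ℝ → ℝ}
    (hG : ContinuousOn G (parabStrip ε)) (M : ℝ) :
    ∃ K, ∀ x ∈ parabStrip ε, |x.1| ≤ M → |G x| ≤ K := by
  have hcompact : IsCompact (parabStrip ε ∩ Icc (-M) M ×ˢ Icc 0 (M ^ 2 + ε ^ 2)) :=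
    (isCompact_Icc.prod isCompact_Icc).inter_left (isClosed_parabStrip ε)
  obtain ⟨K, hK⟩ := hcompact.exists_bound_of_continuousOn (hG.mono inter_subset_left)
  refine ⟨K, fun x hx hxM => hK x ⟨hx, abs_le.1 hxM, (sq_nonneg _).trans hx.1, hx.2.trans ?_⟩⟩
  linarith [sq_le_sq' (abs_le.1 hxM).1 (abs_le.1 hxM).2]

lemma tangentDist_nonneg (ε : ℝ) (x : ℝ × ℝ) : 0 ≤ tangentDist ε x := sqrt_nonneg _

lemma sq_tangentDist (hx : x ∈ parabStrip ε) : tangentDist ε x ^ 2 = ε ^ 2 - height x :=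
  sq_sqrt (sub_nonneg.2 (mem_parabStrip_iff.1 hx).2)

lemma tangentDist_le (hε : 0 ≤ ε) (hx : x ∈ parabStrip ε) : tangentDist ε x ≤ ε :=
  (sqrt_le_left hε).2 (sub_le_self _ (mem_parabStrip_iff.1 hx).1)

lemma sqrt_sub_le_tangentDist (ε : ℝ) (hx : x ∈ parabStrip ε') :
    √(ε ^ 2 - ε' ^ 2) ≤ tangentDist ε x :=
  sqrt_le_sqrt (sub_le_sub_left (mem_parabStrip_iff.1 hx).2 _)

lemma height_combination (hαβ : α + β = 1) (x y : ℝ × ℝ) :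
    height (α • x + β • y) = α * height x + β * height y + α * β * (x.1 - y.1) ^ 2 := by
  obtain rfl : β = 1 - α := by linarith
  simp only [height, Prod.fst_add, Prod.smul_fst, Prod.snd_add, Prod.smul_snd, smul_eq_mul]
  ring

lemma segment_subset_parabStrip (hx : x ∈ parabStrip ε) (hy : y ∈ parabStrip ε)
    (h : |x.1 - y.1| ≤ tangentDist ε x + tangentDist ε y) : segment ℝ x y ⊆ parabStrip ε := by
  rintro _ ⟨α, β, hα, hβ, hαβ, rfl⟩
  rw [mem_parabStrip_iff, height_combination hαβ]
  have hx0 := (mem_parabStrip_iff.1 hx).1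
  have hy0 := (mem_parabStrip_iff.1 hy).1
  refine ⟨by positivity, ?_⟩
  have hsq : α * β * (x.1 - y.1) ^ 2 ≤ α * β * (tangentDist ε x + tangentDist ε y) ^ 2 :=
    mul_le_mul_of_nonneg_left (sq_le_sq.2 (h.trans (le_abs_self _))) (by positivity)
  have hcomplete : α * tangentDist ε x ^ 2 + β * tangentDist ε y ^ 2
      - α * β * (tangentDist ε x + tangentDist ε y) ^ 2
      = (α * tangentDist ε x - β * tangentDist ε y) ^ 2 := by
    obtain rfl : β = 1 - α := by linarith
    ring
  rw [sq_tangentDist hx, sq_tangentDist hy] at hcomplete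
  linear_combination hsq + sq_nonneg (α * tangentDist ε x - β * tangentDist ε y) - hcomplete
    + ε ^ 2 * hαβ

-- If the distance were larger, the point dividing the segment in the ratio `(t + δ) : (s + δ)`,
-- where `s`, `t` are the tangent distances and `2δ` is the excess, would lie above the strip.
lemma abs_fst_sub_le_of_segment_subset (hs : segment ℝ x y ⊆ parabStrip ε) :
    |x.1 - y.1| ≤ tangentDist ε x + tangentDist ε y := by
  have hxsq := sq_tangentDist (hs (left_mem_segment ℝ x y))
  have hysq := sq_tangentDist (hs (right_mem_segment ℝ x y))
  have hx0 := tangentDist_nonneg ε x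
  have hy0 := tangentDist_nonneg ε y
  set s := tangentDist ε x
  set t := tangentDist ε y
  by_contra! hlt
  obtain ⟨δ, hδ, hD⟩ : ∃ δ, 0 < δ ∧ |x.1 - y.1| = s + t + 2 * δ :=
    ⟨(|x.1 - y.1| - s - t) / 2, by linarith, by ring⟩
  set D := |x.1 - y.1|
  have hD0 : 0 < D := by linarith
  have hsum : (t + δ) / D + (s + δ) / D = 1 := by field_simp; linarith
  have hmem : ((t + δ) / D) • x + ((s + δ) / D) • y ∈ parabStrip ε :=
    hs ⟨_, _, by positivity, by positivity, hsum, rfl⟩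
  have hle := (mem_parabStrip_iff.1 hmem).2
  rw [height_combination hsum, ← sq_abs (x.1 - y.1), show height x = ε ^ 2 - s ^ 2 by linarith,
    show height y = ε ^ 2 - t ^ 2 by linarith] at hle
  have hexcess : (t + δ) / D * (ε ^ 2 - s ^ 2) + (s + δ) / D * (ε ^ 2 - t ^ 2)
      + (t + δ) / D * ((s + δ) / D) * D ^ 2
      = ε ^ 2 + (4 * s * t + 3 * δ * (s + t) + 2 * δ ^ 2) * δ / D := by
    field_simp
    rw [hD]
    ring
  have hpos : 0 < (4 * s * t + 3 * δ * (s + t) + 2 * δ ^ 2) * δ / D := by positivity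
  linarith

lemma segment_subset_parabStrip_of_balanced (hα : 0 < α) (hβ : 0 < β) (hαβ : α + β = 1)
    (hx : x ∈ parabStrip ε) (hy : y ∈ parabStrip ε) (hz : α • x + β • y ∈ parabStrip ε)
    (hbal : α * tangentDist ε x = β * tangentDist ε y) : segment ℝ x y ⊆ parabStrip ε := by
  refine segment_subset_parabStrip hx hy (abs_le_of_sq_le_sq ?_
    (add_nonneg (tangentDist_nonneg ε x) (tangentDist_nonneg ε y)))
  have hz' := (mem_parabStrip_iff.1 hz).2
  rw [height_combination hαβ] at hz'
  have hcomplete : α * tangentDist ε x ^ 2 + β * tangentDist ε y ^ 2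
      = α * β * (tangentDist ε x + tangentDist ε y) ^ 2 := by
    obtain rfl : β = 1 - α := by linarith
    linear_combination (α * tangentDist ε x - (1 - α) * tangentDist ε y) * hbal
  rw [sq_tangentDist hx, sq_tangentDist hy] at hcomplete
  refine le_of_mul_le_mul_left ?_ (mul_pos hα hβ)
  linear_combination hz' + hcomplete - ε ^ 2 * hαβ

end ParabolicStrip

section ExponentialMajorant

/-- For fixed `u`, the affine function of `x` supporting `expMajorant ε` along the tangent to the
upper boundary of `Ω_ε` at the point with abscissa `u`. -/
noncomputable def expSupport (ε u : ℝ) (x : ℝ × ℝ) : ℝ :=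
  exp u * (1 + (x.1 - u) + (x.2 - 2 * u * x.1 + u ^ 2 - ε ^ 2) / 2)

/-- A multiple of the Bellman function of `exp` on `Ω_ε`; for `ε < 1` it is a locally concave
majorant witnessing the integral John-Nirenberg inequality. -/
noncomputable def expMajorant (ε : ℝ) (x : ℝ × ℝ) : ℝ :=
  (1 - tangentDist ε x) * exp (x.1 + tangentDist ε x)

variable {ε : ℝ} {x z : ℝ × ℝ}

lemma continuous_expMajorant (ε : ℝ) : Continuous (expMajorant ε) := by
  unfold expMajorant tangentDist height
  fun_prop

lemma expMajorant_mk_sq (hε : 0 ≤ ε) (u : ℝ) :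
    expMajorant ε (u, u ^ 2) = (1 - ε) * exp ε * exp u := by
  have hdist : tangentDist ε (u, u ^ 2) = ε := by simp [tangentDist, height, sqrt_sq hε]
  rw [expMajorant, hdist, exp_add]
  ring

lemma expSupport_combination {α β : ℝ} (hαβ : α + β = 1) (u : ℝ) (x y : ℝ × ℝ) :
    expSupport ε u (α • x + β • y) = α * expSupport ε u x + β * expSupport ε u y := by
  obtain rfl : β = 1 - α := by linarith
  simp only [expSupport, Prod.fst_add, Prod.smul_fst, Prod.snd_add, Prod.smul_snd, smul_eq_mul]
  ring

lemma expMajorant_eq_expSupport (hx : x ∈ parabStrip ε) :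
    expMajorant ε x = expSupport ε (x.1 + tangentDist ε x) x := by
  have hsq := sq_tangentDist hx
  rw [height] at hsq
  rw [expMajorant, expSupport]
  linear_combination -exp (x.1 + tangentDist ε x) / 2 * hsq

lemma hasDerivAt_expSupport (hx : x ∈ parabStrip ε) (u : ℝ) :
    HasDerivAt (fun u => expSupport ε u x)
      (exp u / 2 * ((u - x.1) ^ 2 - tangentDist ε x ^ 2)) u := by
  have hid := hasDerivAt_id' u
  have hquad := (((hid.const_mul 2).mul_const x.1).const_sub x.2).add (hid.pow 2)
  refine ((Real.hasDerivAt_exp u).mul (((hid.const_sub x.1).const_add 1).add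
    ((hquad.sub_const (ε ^ 2)).div_const 2))).congr_deriv ?_
  simp only [Pi.add_apply, Pi.pow_apply]
  rw [sq_tangentDist hx, height]
  push_cast
  ring

lemma isMinOn_expSupport (hx : x ∈ parabStrip ε) :
    IsMinOn (fun u => expSupport ε u x) (Ici (x.1 - tangentDist ε x))
      (x.1 + tangentDist ε x) := by
  have hd := hasDerivAt_expSupport hx
  have hw := tangentDist_nonneg ε x
  have hexp (u : ℝ) : 0 ≤ exp u / 2 := by positivity
  refine isMinOn_Ici_of_deriv (hd _).continuousAt (hd _).continuousAt
    (fun u _ => (hd u).differentiableAt.differentiableWithinAt)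
    (fun u _ => (hd u).differentiableAt.differentiableWithinAt) (fun u hu => ?_) (fun u hu => ?_)
  · rw [(hd u).deriv]
    refine mul_nonpos_of_nonneg_of_nonpos (hexp u) (sub_nonpos.2 (sq_le_sq' ?_ ?_))
    · linarith [hu.1]
    · linarith [hu.2]
  · rw [(hd u).deriv]
    exact mul_nonneg (hexp u) (sub_nonneg.2 (pow_le_pow_left₀ hw (by linarith [mem_Ioi.1 hu]) 2))

lemma expMajorant_le_expSupport (h : segment ℝ x z ⊆ parabStrip ε) :
    expMajorant ε x ≤ expSupport ε (z.1 + tangentDist ε z) x := by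
  have hx := h (left_mem_segment ℝ x z)
  have hdist := (abs_le.1 (abs_fst_sub_le_of_segment_subset h)).2
  rw [expMajorant_eq_expSupport hx]
  exact isMinOn_expSupport hx (mem_Ici.2 (by linarith))

lemma locallyConcaveOn_expMajorant (ε : ℝ) :
    LocallyConcaveOn (parabStrip ε) (expMajorant ε) := by
  intro x y _ _ hs α β hα hβ hαβ
  have hz : α • x + β • y ∈ segment ℝ x y := ⟨α, β, hα, hβ, hαβ, rfl⟩
  rw [expMajorant_eq_expSupport (hs hz), expSupport_combination hαβ]
  have hsub {w : ℝ × ℝ} (hw : w ∈ segment ℝ x y) : segment ℝ w (α • x + β • y) ⊆ parabStrip ε :=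
    ((convex_segment x y).segment_subset hw hz).trans hs
  gcongr
  · exact expMajorant_le_expSupport (hsub (left_mem_segment ℝ x y))
  · exact expMajorant_le_expSupport (hsub (right_mem_segment ℝ x y))

end ExponentialMajorant

section Averages

/-- The pair `(⟨φ⟩, ⟨φ²⟩)` of averages over the interval with endpoints `a`, `b`. -/
noncomputable def bellmanPoint (φ : ℝ → ℝ) (a b : ℝ) : ℝ × ℝ :=
  (intAvg φ a b, intAvg (fun t => φ t ^ 2) a b)

variable {g h φ : ℝ → ℝ} {a b c M : ℝ}

lemma sub_mul_intAvg (g : ℝ → ℝ) (a b : ℝ) : (b - a) * intAvg g a b = ∫ t in a..b, g t := by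
  rcases eq_or_ne a b with rfl | hab
  · simp
  · exact mul_div_cancel₀ _ (sub_ne_zero.2 hab.symm)

lemma sub_mul_intAvg_add_sub_mul_intAvg (hac : IntervalIntegrable g volume a c)
    (hcb : IntervalIntegrable g volume c b) :
    (c - a) * intAvg g a c + (b - c) * intAvg g c b = (b - a) * intAvg g a b := by
  simp only [sub_mul_intAvg, intervalIntegral.integral_add_adjacent_intervals hac hcb]

lemma intAvg_mono (hab : a < b) (hg : IntervalIntegrable g volume a b)
    (hh : IntervalIntegrable h volume a b) (hgh : ∀ t, g t ≤ h t) :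
    intAvg g a b ≤ intAvg h a b :=
  div_le_div_of_nonneg_right (intervalIntegral.integral_mono hab.le hg hh hgh) (sub_pos.2 hab).le

lemma intAvg_const_mul (k : ℝ) (g : ℝ → ℝ) (a b : ℝ) :
    intAvg (fun t => k * g t) a b = k * intAvg g a b := by
  rw [intAvg, intAvg, intervalIntegral.integral_const_mul, mul_div_assoc]

lemma intAvg_const (hab : a < b) (k : ℝ) : intAvg (fun _ => k) a b = k := by
  rw [intAvg, intervalIntegral.integral_const, smul_eq_mul,
    mul_div_cancel_left₀ _ (sub_pos.2 hab).ne']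

lemma abs_intAvg_le (hab : a < b) (hM : ∀ t, |g t| ≤ M) : |intAvg g a b| ≤ M := by
  rw [intAvg, abs_div, div_le_iff₀ (abs_pos.2 (sub_pos.2 hab).ne'), ← norm_eq_abs]
  exact intervalIntegral.norm_integral_le_of_norm_le_const fun t _ => hM t

lemma intervalIntegrable_sub_const_sq (hφ : IntervalIntegrable φ volume a b)
    (hφsq : IntervalIntegrable (fun t => φ t ^ 2) volume a b) (m : ℝ) :
    IntervalIntegrable (fun t => (φ t - m) ^ 2) volume a b := by
  simp only [sub_sq]
  exact (hφsq.sub ((hφ.const_mul 2).mul_const m)).add intervalIntegrable_const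

lemma intAvg_sub_const_sq (hab : a < b) (hφ : IntervalIntegrable φ volume a b)
    (hφsq : IntervalIntegrable (fun t => φ t ^ 2) volume a b) (m : ℝ) :
    intAvg (fun t => (φ t - m) ^ 2) a b = height (bellmanPoint φ a b) + (intAvg φ a b - m) ^ 2 := by
  have hba : b - a ≠ 0 := (sub_pos.2 hab).ne'
  have hcross := (hφ.const_mul 2).mul_const m
  simp only [sub_sq, intAvg, height, bellmanPoint]
  rw [intervalIntegral.integral_add (hφsq.sub hcross) intervalIntegrable_const,
    intervalIntegral.integral_sub hφsq hcross, intervalIntegral.integral_mul_const,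
    intervalIntegral.integral_const_mul, intervalIntegral.integral_const, smul_eq_mul]
  field_simp
  ring

lemma height_bellmanPoint_nonneg (hab : a < b) (hφ : IntervalIntegrable φ volume a b)
    (hφsq : IntervalIntegrable (fun t => φ t ^ 2) volume a b) :
    0 ≤ height (bellmanPoint φ a b) := by
  have hvar := intAvg_sub_const_sq hab hφ hφsq (intAvg φ a b)
  rw [sub_self, zero_pow two_ne_zero, add_zero] at hvar
  rw [← hvar]
  exact div_nonneg (intervalIntegral.integral_nonneg hab.le fun t _ => sq_nonneg _)
    (sub_pos.2 hab).le

lemma height_bellmanPoint_le (hab : a < b) (hφ : IntervalIntegrable φ volume a b)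
    (hφsq : IntervalIntegrable (fun t => φ t ^ 2) volume a b) (m : ℝ) :
    height (bellmanPoint φ a b) ≤ intAvg (fun t => (φ t - m) ^ 2) a b := by
  rw [intAvg_sub_const_sq hab hφ hφsq m]
  exact le_add_of_nonneg_right (sq_nonneg _)

lemma bellmanPoint_eq_combination (hab : a < b) (hac : IntervalIntegrable φ volume a c)
    (hcb : IntervalIntegrable φ volume c b)
    (hacsq : IntervalIntegrable (fun t => φ t ^ 2) volume a c)
    (hcbsq : IntervalIntegrable (fun t => φ t ^ 2) volume c b) :
    ((c - a) / (b - a)) • bellmanPoint φ a c + ((b - c) / (b - a)) • bellmanPoint φ c b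
      = bellmanPoint φ a b := by
  have hba : b - a ≠ 0 := (sub_pos.2 hab).ne'
  ext
  · simp only [bellmanPoint, Prod.fst_add, Prod.smul_fst, smul_eq_mul]
    field_simp
    exact sub_mul_intAvg_add_sub_mul_intAvg hac hcb
  · simp only [bellmanPoint, Prod.snd_add, Prod.smul_snd, smul_eq_mul]
    field_simp
    exact sub_mul_intAvg_add_sub_mul_intAvg hacsq hcbsq

lemma bellmanPoint_symm (φ : ℝ → ℝ) (a b : ℝ) : bellmanPoint φ a b = bellmanPoint φ b a := by
  simp only [bellmanPoint, intAvg, intervalIntegral.integral_symm b a, ← neg_sub b a,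
    neg_div, div_neg]

lemma abs_sub_mul_tangentDist_bellmanPoint (ε : ℝ) (φ : ℝ → ℝ) (a b : ℝ) :
    |b - a| * tangentDist ε (bellmanPoint φ a b)
      = √((b - a) ^ 2 * ε ^ 2 - (b - a) * (∫ t in a..b, φ t ^ 2) + (∫ t in a..b, φ t) ^ 2) := by
  rw [← sub_mul_intAvg φ, ← sub_mul_intAvg (fun t => φ t ^ 2), tangentDist, height, bellmanPoint,
    ← sqrt_sq_eq_abs, ← sqrt_mul (sq_nonneg _)]
  ring_nf

lemma continuousOn_abs_sub_mul_tangentDist (ε : ℝ) (hφ : IntervalIntegrable φ volume a b)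
    (hφsq : IntervalIntegrable (fun t => φ t ^ 2) volume a b) :
    ContinuousOn (fun c => |c - a| * tangentDist ε (bellmanPoint φ a c)) (uIcc a b) := by
  have hcont := intervalIntegral.continuousOn_primitive_interval' hφ left_mem_uIcc
  have hcontsq := intervalIntegral.continuousOn_primitive_interval' hφsq left_mem_uIcc
  simp only [abs_sub_mul_tangentDist_bellmanPoint]
  fun_prop

end Averages

namespace memBMOe

variable {ε l r a b : ℝ} {φ : ℝ → ℝ}

lemma mono_interval (hφ : memBMOe ε l r φ) (hla : l ≤ a) (hbr : b ≤ r) : memBMOe ε a b φ :=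
  ⟨hφ.1.mono_set (Ioo_subset_Ioo hla hbr), hφ.2.1.mono_set (Ioo_subset_Ioo hla hbr),
    fun c d hac hcd hdb => hφ.2.2 c d (hla.trans hac) hcd (hdb.trans hbr)⟩

lemma intervalIntegrable (hφ : memBMOe ε l r φ) (hlr : l ≤ r) : IntervalIntegrable φ volume l r :=
  (intervalIntegrable_iff_integrableOn_Ioo_of_le hlr).2 hφ.1

lemma intervalIntegrable_sq (hφ : memBMOe ε l r φ) (hlr : l ≤ r) :
    IntervalIntegrable (fun t => φ t ^ 2) volume l r :=
  (intervalIntegrable_iff_integrableOn_Ioo_of_le hlr).2 hφ.2.1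

lemma bellmanPoint_mem (hφ : memBMOe ε l r φ) (hlr : l < r) : bellmanPoint φ l r ∈ parabStrip ε :=
  mem_parabStrip_iff.2 ⟨height_bellmanPoint_nonneg hlr (hφ.intervalIntegrable hlr.le)
    (hφ.intervalIntegrable_sq hlr.le), hφ.2.2 l r le_rfl hlr le_rfl⟩

lemma memLp_two (hφ : memBMOe ε l r φ) : MemLp φ 2 (volume.restrict (Ioo l r)) :=
  (memLp_two_iff_integrable_sq hφ.1.aestronglyMeasurable).2 hφ.2.1

lemma memLp_two_comp {K : ℝ≥0} {T : ℝ → ℝ} (hT : LipschitzWith K T) (hφ : memBMOe ε l r φ) :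
    MemLp (fun t => T (φ t)) 2 (volume.restrict (Ioo l r)) := by
  have hshift : LipschitzWith K fun x => T x - T 0 := by
    simpa using hT.sub (LipschitzWith.const (T 0))
  have hadd := (hshift.comp_memLp (sub_self _) hφ.memLp_two).add (memLp_const (T 0))
  exact hadd.ae_eq (.of_forall fun t => by simp)

lemma comp_lipschitz {K : ℝ≥0} {T : ℝ → ℝ} (hT : LipschitzWith K T) (hφ : memBMOe ε l r φ) :
    memBMOe (K * ε) l r fun t => T (φ t) := by
  have hTφ := hφ.memLp_two_comp hT
  have hint := hTφ.integrable one_le_two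
  have hintsq := hTφ.integrable_sq
  refine ⟨hint, hintsq, fun c d hlc hcd hdr => ?_⟩
  have hii {g : ℝ → ℝ} (hg : IntegrableOn g (Ioo l r)) : IntervalIntegrable g volume c d :=
    (intervalIntegrable_iff_integrableOn_Ioo_of_le hcd.le).2 (hg.mono_set (Ioo_subset_Ioo hlc hdr))
  set m := intAvg φ c d with hm
  have hpointwise (t : ℝ) : (T (φ t) - T m) ^ 2 ≤ K ^ 2 * (φ t - m) ^ 2 := by
    rw [← sq_abs (T _ - _), ← sq_abs (φ t - m), ← mul_pow]
    exact pow_le_pow_left₀ (abs_nonneg _) (hT.dist_le_mul _ _) 2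
  have hdev := intervalIntegrable_sub_const_sq (hii hφ.1) (hii hφ.2.1) m
  calc height (bellmanPoint (fun t => T (φ t)) c d)
      ≤ intAvg (fun t => (T (φ t) - T m) ^ 2) c d :=
        height_bellmanPoint_le hcd (hii hint) (hii hintsq) (T m)
    _ ≤ intAvg (fun t => K ^ 2 * (φ t - m) ^ 2) c d :=
        intAvg_mono hcd (intervalIntegrable_sub_const_sq (hii hint) (hii hintsq) _)
          (hdev.const_mul _) hpointwise
    _ = K ^ 2 * height (bellmanPoint φ c d) := by
        rw [intAvg_const_mul, intAvg_sub_const_sq hcd (hii hφ.1) (hii hφ.2.1), hm, sub_self]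
        ring
    _ ≤ K ^ 2 * ε ^ 2 := mul_le_mul_of_nonneg_left (hφ.2.2 c d hlc hcd hdr) (sq_nonneg _)
    _ = (K * ε) ^ 2 := (mul_pow _ _ _).symm

end memBMOe

section Refinement

/-- Endpoint pairs of the nondegenerate subintervals of `[l, r]` that contain `t`. The filter
`𝓝[subintervalsAt l r t] (t, t)` describes such intervals shrinking to `t`. -/
def subintervalsAt (l r t : ℝ) : Set (ℝ × ℝ) :=
  {p | l ≤ p.1 ∧ p.1 < p.2 ∧ p.2 ≤ r ∧ t ∈ Icc p.1 p.2}

/-- A cut of `[a, b]` at `c` that shortens lengths by the factor `θ` and does not increase the sum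
of the interval function `(b - a) * H a b` over the pieces. -/
structure IsSplit (H : ℝ → ℝ → ℝ) (θ a b c : ℝ) : Prop where
  mem_Ioo : c ∈ Ioo a b
  left_le : c - a ≤ θ * (b - a)
  right_le : b - c ≤ θ * (b - a)
  add_le : (c - a) * H a c + (b - c) * H c b ≤ (b - a) * H a b

/-- `T` takes at each point the value of the interval function `H` at some interval of length at
most `δ` around that point, as for the step function of a partition of `[a, b]` of mesh `δ`. -/
structure IsRefinement (H : ℝ → ℝ → ℝ) (a b δ : ℝ) (T : ℝ → ℝ) : Prop where
  intervalIntegrable : IntervalIntegrable T volume a b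
  exists_eq : ∀ t ∈ Ioc a b, ∃ p ∈ subintervalsAt a b t, p.2 - p.1 ≤ δ ∧ T t = H p.1 p.2

variable {H : ℝ → ℝ → ℝ} {T T₁ T₂ g : ℝ → ℝ} {l r t a b c δ δ' θ K : ℝ}

lemma subintervalsAt_subset (hla : l ≤ a) (hbr : b ≤ r) :
    subintervalsAt a b t ⊆ subintervalsAt l r t :=
  fun _ hp => ⟨hla.trans hp.1, hp.2.1, hp.2.2.1.trans hbr, hp.2.2.2⟩

lemma tendsto_nhdsWithin_subintervalsAt {ι : Type*} {F : Filter ι} {p : ι → ℝ × ℝ}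
    (hp : ∀ i, p i ∈ subintervalsAt l r t)
    (hlen : Tendsto (fun i => (p i).2 - (p i).1) F (𝓝 0)) :
    Tendsto p F (𝓝[subintervalsAt l r t] (t, t)) := by
  refine tendsto_nhdsWithin_iff.2 ⟨Tendsto.prodMk_nhds ?_ ?_, .of_forall hp⟩
  · refine tendsto_of_tendsto_of_tendsto_of_le_of_le (by simpa using hlen.const_sub t)
      tendsto_const_nhds (fun i => ?_) fun i => (hp i).2.2.2.1
    linarith [(hp i).2.2.2.2]
  · refine tendsto_of_tendsto_of_tendsto_of_le_of_le tendsto_const_nhds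
      (by simpa using hlen.const_add t) (fun i => (hp i).2.2.2.2) fun i => ?_
    linarith [(hp i).2.2.2.1]

lemma eqOn_piecewise_Iic_left (hac : a ≤ c) : EqOn T₁ ((Iic c).piecewise T₁ T₂) (uIoc a c) := by
  rw [uIoc_of_le hac]
  exact (piecewise_eqOn _ _ _).symm.mono Ioc_subset_Iic_self

lemma eqOn_piecewise_Iic_right (hcb : c ≤ b) : EqOn T₂ ((Iic c).piecewise T₁ T₂) (uIoc c b) := by
  rw [uIoc_of_le hcb]
  exact (piecewise_eqOn_compl _ _ _).symm.mono (compl_Iic (a := c) ▸ Ioc_subset_Ioi_self)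

lemma intervalIntegrable_piecewise_Iic (hac : a ≤ c) (hcb : c ≤ b)
    (h₁ : IntervalIntegrable T₁ volume a c) (h₂ : IntervalIntegrable T₂ volume c b) :
    IntervalIntegrable ((Iic c).piecewise T₁ T₂) volume a b :=
  ((intervalIntegrable_congr (eqOn_piecewise_Iic_left hac)).1 h₁).trans
    ((intervalIntegrable_congr (eqOn_piecewise_Iic_right hcb)).1 h₂)

lemma integral_piecewise_Iic (hac : a ≤ c) (hcb : c ≤ b) (h₁ : IntervalIntegrable T₁ volume a c)
    (h₂ : IntervalIntegrable T₂ volume c b) :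
    ∫ t in a..b, (Iic c).piecewise T₁ T₂ t = (∫ t in a..c, T₁ t) + ∫ t in c..b, T₂ t := by
  have hleft := eqOn_piecewise_Iic_left (T₁ := T₁) (T₂ := T₂) hac
  have hright := eqOn_piecewise_Iic_right (T₁ := T₁) (T₂ := T₂) hcb
  rw [← intervalIntegral.integral_add_adjacent_intervals ((intervalIntegrable_congr hleft).1 h₁)
    ((intervalIntegrable_congr hright).1 h₂), intervalIntegral.integral_congr_ae (.of_forall hleft),
    intervalIntegral.integral_congr_ae (.of_forall hright)]

namespace IsRefinement

lemma mono (h : IsRefinement H a b δ T) (hδ : δ ≤ δ') : IsRefinement H a b δ' T where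
  intervalIntegrable := h.intervalIntegrable
  exists_eq t ht :=
    have ⟨p, hp, hlen, heq⟩ := h.exists_eq t ht
    ⟨p, hp, hlen.trans hδ, heq⟩

lemma glue (h₁ : IsRefinement H a c δ T₁) (h₂ : IsRefinement H c b δ T₂) (hac : a ≤ c)
    (hcb : c ≤ b) : IsRefinement H a b δ ((Iic c).piecewise T₁ T₂) where
  intervalIntegrable :=
    intervalIntegrable_piecewise_Iic hac hcb h₁.intervalIntegrable h₂.intervalIntegrable
  exists_eq t ht := by
    rcases le_or_gt t c with htc | hct
    · obtain ⟨p, hp, hlen, heq⟩ := h₁.exists_eq t ⟨ht.1, htc⟩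
      refine ⟨p, subintervalsAt_subset le_rfl hcb hp, hlen, ?_⟩
      rwa [piecewise_eq_of_mem _ _ _ (mem_Iic.2 htc)]
    · obtain ⟨p, hp, hlen, heq⟩ := h₂.exists_eq t ⟨hct, ht.2⟩
      refine ⟨p, subintervalsAt_subset hac le_rfl hp, hlen, ?_⟩
      rwa [piecewise_eq_of_notMem _ _ _ (notMem_Iic.2 hct)]

end IsRefinement

lemma exists_isRefinement (hθ : 0 ≤ θ)
    (hsplit : ∀ a b, l ≤ a → a < b → b ≤ r → ∃ c, IsSplit H θ a b c) (n : ℕ) (hla : l ≤ a)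
    (hab : a < b) (hbr : b ≤ r) :
    ∃ T, IsRefinement H a b (θ ^ n * (b - a)) T ∧ ∫ t in a..b, T t ≤ (b - a) * H a b := by
  induction n generalizing a b with
  | zero =>
    refine ⟨fun _ => H a b, ⟨intervalIntegrable_const, fun t ht => ?_⟩, by simp⟩
    exact ⟨(a, b), ⟨le_rfl, hab, le_rfl, Ioc_subset_Icc_self ht⟩, by simp, rfl⟩
  | succ n ih =>
    obtain ⟨c, ⟨hac, hcb⟩, hleft, hright, hadd⟩ := hsplit a b hla hab hbr
    obtain ⟨T₁, h₁, hle₁⟩ := ih hla hac (hcb.le.trans hbr)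
    obtain ⟨T₂, h₂, hle₂⟩ := ih (hla.trans hac.le) hcb hbr
    have hmesh {d : ℝ} (hd : d ≤ θ * (b - a)) : θ ^ n * d ≤ θ ^ (n + 1) * (b - a) := by
      rw [pow_succ, mul_assoc]
      exact mul_le_mul_of_nonneg_left hd (pow_nonneg hθ n)
    refine ⟨_, (h₁.mono (hmesh hleft)).glue (h₂.mono (hmesh hright)) hac.le hcb.le, ?_⟩
    rw [integral_piecewise_Iic hac.le hcb.le h₁.intervalIntegrable h₂.intervalIntegrable]
    linarith

lemma integral_le_of_isSplit (hθ0 : 0 ≤ θ) (hθ1 : θ < 1) (hlr : l < r)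
    (hsplit : ∀ a b, l ≤ a → a < b → b ≤ r → ∃ c, IsSplit H θ a b c)
    (hK : ∀ a b, l ≤ a → a < b → b ≤ r → |H a b| ≤ K)
    (hlim : ∀ᵐ t, t ∈ Ioc l r →
      Tendsto (fun p : ℝ × ℝ => H p.1 p.2) (𝓝[subintervalsAt l r t] (t, t)) (𝓝 (g t))) :
    ∫ t in l..r, g t ≤ (r - l) * H l r := by
  choose T hT hTle using fun n => exists_isRefinement hθ0 hsplit n le_rfl hlr le_rfl
  have hmesh : Tendsto (fun n : ℕ => θ ^ n * (r - l)) atTop (𝓝 0) := by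
    simpa using (tendsto_pow_atTop_nhds_zero_of_lt_one hθ0 hθ1).mul_const (r - l)
  suffices hconv : Tendsto (fun n => ∫ t in l..r, T n t) atTop (𝓝 (∫ t in l..r, g t)) from
    le_of_tendsto hconv (.of_forall hTle)
  refine intervalIntegral.tendsto_integral_filter_of_dominated_convergence (fun _ => K) ?_ ?_
    intervalIntegrable_const ?_
  · exact .of_forall fun n => (hT n).intervalIntegrable.def'.aestronglyMeasurable
  · refine .of_forall fun n => .of_forall fun t ht => ?_
    obtain ⟨p, hp, -, heq⟩ := (hT n).exists_eq t (uIoc_of_le hlr.le ▸ ht)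
    rw [heq]
    exact hK _ _ hp.1 hp.2.1 hp.2.2.1
  · filter_upwards [hlim] with t htlim ht
    rw [uIoc_of_le hlr.le] at ht
    choose p hp hlen heq using fun n => (hT n).exists_eq t ht
    have hshrink := squeeze_zero (fun n => (sub_pos.2 (hp n).2.1).le) hlen hmesh
    simpa only [Function.comp_def, ← heq] using
      (htlim ht).comp (tendsto_nhdsWithin_subintervalsAt hp hshrink)

end Refinement

section LebesgueDifferentiation

variable {l r : ℝ} {g : ℝ → ℝ}

lemma intAvg_eq_setAverage_indicator {p : ℝ × ℝ} {t : ℝ} (hp : p ∈ subintervalsAt l r t) :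
    intAvg g p.1 p.2 =
      ⨍ s in Metric.closedBall ((p.1 + p.2) / 2) ((p.2 - p.1) / 2), (Ioo l r).indicator g s := by
  obtain ⟨hl, hlt, hr, -⟩ := hp
  rw [← Icc_eq_closedBall, setAverage_eq, intAvg, intervalIntegral.integral_of_le hlt.le,
    integral_Icc_eq_integral_Ioo, integral_Ioc_eq_integral_Ioo, volume_real_Icc_of_le hlt.le,
    smul_eq_mul, div_eq_inv_mul]
  congr 1
  exact setIntegral_congr_fun measurableSet_Ioo fun s hs =>
    (indicator_of_mem (Ioo_subset_Ioo hl hr hs) g).symm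

lemma ae_tendsto_intAvg (hg : IntegrableOn g (Ioo l r)) :
    ∀ᵐ t, t ∈ Ioc l r →
      Tendsto (fun p : ℝ × ℝ => intAvg g p.1 p.2) (𝓝[subintervalsAt l r t] (t, t)) (𝓝 (g t)) := by
  have hgint := (hg.integrable_indicator measurableSet_Ioo).locallyIntegrable
  filter_upwards [IsUnifLocDoublingMeasure.ae_tendsto_average (μ := volume) hgint 1,
    Measure.ae_ne volume r] with t hdiff htr ht
  rw [← indicator_of_mem (show t ∈ Ioo l r from ⟨ht.1, ht.2.lt_of_ne htr⟩) g]
  refine (hdiff (fun p : ℝ × ℝ => (p.1 + p.2) / 2) (fun p => (p.2 - p.1) / 2)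
    (tendsto_nhdsWithin_iff.2 ⟨?_, ?_⟩) ?_).congr' ?_
  · have hcont : Continuous fun p : ℝ × ℝ => (p.2 - p.1) / 2 := by fun_prop
    exact (hcont.tendsto' (t, t) 0 (by simp)).mono_left nhdsWithin_le_nhds
  · filter_upwards [self_mem_nhdsWithin] with p hp
    exact half_pos (sub_pos.2 hp.2.1)
  · filter_upwards [self_mem_nhdsWithin] with p hp
    rw [one_mul, ← Icc_eq_closedBall]
    exact hp.2.2.2
  · filter_upwards [self_mem_nhdsWithin] with p hp
    exact (intAvg_eq_setAverage_indicator hp).symm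

end LebesgueDifferentiation

section Splitting

variable {ε ε' a b : ℝ} {φ : ℝ → ℝ}

lemma exists_balanced_split (hφ : memBMOe ε' a b φ) (hab : a < b) (hε : ε' ^ 2 < ε ^ 2) :
    ∃ c ∈ Ioo a b, (c - a) * tangentDist ε (bellmanPoint φ a c)
      = (b - c) * tangentDist ε (bellmanPoint φ c b) := by
  have hint := hφ.intervalIntegrable hab.le
  have hintsq := hφ.intervalIntegrable_sq hab.le
  have hpos : 0 < |b - a| * tangentDist ε (bellmanPoint φ a b) :=
    mul_pos (abs_pos.2 (sub_pos.2 hab).ne') ((sqrt_pos.2 (sub_pos.2 hε)).trans_le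
      (sqrt_sub_le_tangentDist ε (hφ.bellmanPoint_mem hab)))
  have hleft := continuousOn_abs_sub_mul_tangentDist ε hint hintsq
  have hright := continuousOn_abs_sub_mul_tangentDist ε hint.symm hintsq.symm
  rw [uIcc_of_le hab.le] at hleft
  rw [uIcc_of_ge hab.le] at hright
  obtain ⟨c, hc, hbal⟩ := isPreconnected_Icc.intermediate_value₂ (left_mem_Icc.2 hab.le)
    (right_mem_Icc.2 hab.le) hleft hright
    (by simpa using mul_nonneg (abs_nonneg _) (tangentDist_nonneg _ _))
    (by simpa using mul_nonneg (abs_nonneg _) (tangentDist_nonneg _ _))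
  have hac : a < c := by
    refine hc.1.lt_of_ne fun hac => ?_
    rw [← hac, sub_self, abs_zero, zero_mul, abs_sub_comm, bellmanPoint_symm] at hbal
    exact hpos.ne hbal
  have hcb : c < b := by
    refine hc.2.lt_of_ne fun hcb => ?_
    rw [hcb, sub_self, abs_zero, zero_mul] at hbal
    exact hpos.ne' hbal
  refine ⟨c, ⟨hac, hcb⟩, ?_⟩
  rwa [abs_of_pos (sub_pos.2 hac), abs_sub_comm, abs_of_pos (sub_pos.2 hcb),
    bellmanPoint_symm φ b] at hbal

/-- A uniform bound for the ratio of the lengths of the pieces of a balanced splitting to the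
length of the interval, for functions in `BMO_ε'` split in `Ω_ε`. -/
noncomputable def splitRatio (ε ε' : ℝ) : ℝ := 1 - √(ε ^ 2 - ε' ^ 2) / (2 * ε)

lemma sqrt_sq_sub_sq_le (hε : 0 ≤ ε) (ε' : ℝ) : √(ε ^ 2 - ε' ^ 2) ≤ ε :=
  (sqrt_le_left hε).2 (sub_le_self _ (sq_nonneg _))

lemma splitRatio_nonneg (hε : 0 < ε) (ε' : ℝ) : 0 ≤ splitRatio ε ε' := by
  rw [splitRatio, sub_nonneg, div_le_one (by positivity)]
  linarith [sqrt_sq_sub_sq_le hε.le ε']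

lemma splitRatio_lt_one (hε : 0 < ε) (hε' : ε' ^ 2 < ε ^ 2) : splitRatio ε ε' < 1 :=
  sub_lt_self _ (div_pos (sqrt_pos.2 (sub_pos.2 hε')) (by positivity))

lemma le_splitRatio_mul {x y : ℝ × ℝ} {s t : ℝ} (hε : 0 < ε) (hx : x ∈ parabStrip ε)
    (hy : y ∈ parabStrip ε') (hs : 0 ≤ s) (ht : 0 ≤ t)
    (hbal : s * tangentDist ε x = t * tangentDist ε y) : t ≤ splitRatio ε ε' * (s + t) := by
  have hs' : √(ε ^ 2 - ε' ^ 2) * s ≤ ε * s :=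
    mul_le_mul_of_nonneg_right (sqrt_sq_sub_sq_le hε.le ε') hs
  have ht' : √(ε ^ 2 - ε' ^ 2) * t ≤ ε * s := calc
    √(ε ^ 2 - ε' ^ 2) * t ≤ tangentDist ε y * t :=
        mul_le_mul_of_nonneg_right (sqrt_sub_le_tangentDist ε hy) ht
    _ = tangentDist ε x * s := by linarith
    _ ≤ ε * s := mul_le_mul_of_nonneg_right (tangentDist_le hε.le hx) hs
  have hgap : √(ε ^ 2 - ε' ^ 2) / (2 * ε) * (s + t) ≤ s := by
    rw [div_mul_eq_mul_div, div_le_iff₀ (by positivity)]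
    linarith
  rw [splitRatio]
  linarith

lemma LocallyConcaveOn.isSplit_of_balanced {G : ℝ × ℝ → ℝ} {c : ℝ}
    (hG : LocallyConcaveOn (parabStrip ε) G) (hφ : memBMOe ε' a b φ) (hε : 0 < ε)
    (hε' : ε' ^ 2 ≤ ε ^ 2) (hc : c ∈ Ioo a b)
    (hbal : (c - a) * tangentDist ε (bellmanPoint φ a c)
      = (b - c) * tangentDist ε (bellmanPoint φ c b)) :
    IsSplit (fun u v => G (bellmanPoint φ u v)) (splitRatio ε ε') a b c := by
  obtain ⟨hac, hcb⟩ := hc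
  have hab := hac.trans hcb
  have hba := sub_pos.2 hab
  have hφac := hφ.mono_interval le_rfl hcb.le
  have hφcb := hφ.mono_interval hac.le le_rfl
  have hmemac := hφac.bellmanPoint_mem hac
  have hmemcb := hφcb.bellmanPoint_mem hcb
  have hsub := parabStrip_subset hε'
  have hcomb := bellmanPoint_eq_combination hab (hφac.intervalIntegrable hac.le)
    (hφcb.intervalIntegrable hcb.le) (hφac.intervalIntegrable_sq hac.le)
    (hφcb.intervalIntegrable_sq hcb.le)
  have hα : 0 < (c - a) / (b - a) := div_pos (sub_pos.2 hac) hba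
  have hβ : 0 < (b - c) / (b - a) := div_pos (sub_pos.2 hcb) hba
  have hαβ : (c - a) / (b - a) + (b - c) / (b - a) = 1 := by field_simp; ring
  have hsegment := segment_subset_parabStrip_of_balanced hα hβ hαβ (hsub hmemac) (hsub hmemcb)
    (hcomb ▸ hsub (hφ.bellmanPoint_mem hab))
    (by rw [div_mul_eq_mul_div, div_mul_eq_mul_div, hbal])
  have hconc := hG _ _ (hsub hmemac) (hsub hmemcb) hsegment _ _ hα.le hβ.le hαβ
  have hac0 := (sub_pos.2 hac).le
  have hcb0 := (sub_pos.2 hcb).le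
  refine ⟨⟨hac, hcb⟩, ?_, ?_, ?_⟩
  · simpa using le_splitRatio_mul hε (hsub hmemcb) hmemac hcb0 hac0 hbal.symm
  · simpa using le_splitRatio_mul hε (hsub hmemac) hmemcb hac0 hcb0 hbal
  · rw [hcomb] at hconc
    calc (c - a) * G (bellmanPoint φ a c) + (b - c) * G (bellmanPoint φ c b)
        = (b - a) * ((c - a) / (b - a) * G (bellmanPoint φ a c)
            + (b - c) / (b - a) * G (bellmanPoint φ c b)) := by field_simp
      _ ≤ (b - a) * G (bellmanPoint φ a b) := mul_le_mul_of_nonneg_left hconc hba.le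

lemma LocallyConcaveOn.exists_isSplit {G : ℝ × ℝ → ℝ} (hG : LocallyConcaveOn (parabStrip ε) G)
    (hφ : memBMOe ε' a b φ) (hab : a < b) (hε : 0 < ε) (hε' : ε' ^ 2 < ε ^ 2) :
    ∃ c, IsSplit (fun u v => G (bellmanPoint φ u v)) (splitRatio ε ε') a b c :=
  have ⟨c, hc, hbal⟩ := exists_balanced_split hφ hab hε'
  ⟨c, hG.isSplit_of_balanced hφ hε hε'.le hc hbal⟩

theorem LocallyConcaveOn.integral_le_of_abs_le {G : ℝ × ℝ → ℝ} {M : ℝ}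
    (hG : LocallyConcaveOn (parabStrip ε) G) (hGcont : ContinuousOn G (parabStrip ε))
    (hφ : memBMOe ε' a b φ) (hab : a < b) (hε : 0 < ε) (hε' : ε' ^ 2 < ε ^ 2)
    (hM : ∀ t, |φ t| ≤ M) :
    ∫ t in a..b, G (φ t, φ t ^ 2) ≤ (b - a) * G (bellmanPoint φ a b) := by
  obtain ⟨K, hK⟩ := exists_abs_le_of_continuousOn_parabStrip hGcont M
  have hmem {c d : ℝ} (hac : a ≤ c) (hcd : c < d) (hdb : d ≤ b) :
      bellmanPoint φ c d ∈ parabStrip ε :=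
    parabStrip_subset hε'.le ((hφ.mono_interval hac hdb).bellmanPoint_mem hcd)
  refine integral_le_of_isSplit (H := fun c d => G (bellmanPoint φ c d))
    (splitRatio_nonneg hε ε') (splitRatio_lt_one hε hε') hab
    (fun c d hac hcd hdb => hG.exists_isSplit (hφ.mono_interval hac hdb) hcd hε hε')
    (fun c d hac hcd hdb => hK _ (hmem hac hcd hdb) (abs_intAvg_le hcd hM)) ?_
  filter_upwards [ae_tendsto_intAvg hφ.1, ae_tendsto_intAvg hφ.2.1] with t hlim hlimsq ht
  refine (hGcont _ (mk_sq_mem_parabStrip ε (φ t))).tendsto.comp (tendsto_nhdsWithin_iff.2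
    ⟨(hlim ht).prodMk_nhds (hlimsq ht), ?_⟩)
  filter_upwards [self_mem_nhdsWithin] with p hp
  exact hmem hp.1 hp.2.1 hp.2.2.1

end Splitting

section Truncation

/-- Truncation at the levels `±n` followed by contraction with the factor `n / (n + 1) < 1`: it
takes functions of `BMO_ε` to bounded functions in a smaller ball. -/
noncomputable def truncContract (n : ℕ) (x : ℝ) : ℝ := n / (n + 1) * max (-(n : ℝ)) (min x n)

lemma lipschitzWith_truncContract (n : ℕ) :
    LipschitzWith (n / (n + 1)) (truncContract n) := by
  have htrunc : LipschitzWith 1 fun x : ℝ => max (-(n : ℝ)) (min x n) :=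
    (LipschitzWith.id.min_const _).const_max _
  refine LipschitzWith.of_dist_le_mul fun x y => ?_
  rw [truncContract, truncContract, dist_eq, ← mul_sub, abs_mul, abs_of_nonneg (by positivity)]
  push_cast
  gcongr
  simpa [dist_eq] using htrunc.dist_le_mul x y

lemma natCast_div_add_one_lt_one (n : ℕ) : (n / (n + 1) : ℝ) < 1 :=
  (div_lt_one (by positivity)).2 (lt_add_one _)

lemma abs_truncContract_le_abs (n : ℕ) (x : ℝ) : |truncContract n x| ≤ |x| := by
  have hzero : truncContract n 0 = 0 := by simp [truncContract]
  have hlip := (lipschitzWith_truncContract n).dist_le_mul x 0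
  rw [hzero, dist_zero_right, dist_zero_right, norm_eq_abs, norm_eq_abs] at hlip
  push_cast at hlip
  exact hlip.trans (mul_le_of_le_one_left (abs_nonneg x) (natCast_div_add_one_lt_one n).le)

lemma abs_truncContract_le (n : ℕ) (x : ℝ) : |truncContract n x| ≤ n := by
  have htrunc : |max (-(n : ℝ)) (min x n)| ≤ n :=
    abs_le.2 ⟨le_max_left _ _, max_le (neg_le_self n.cast_nonneg) (min_le_right _ _)⟩
  rw [truncContract, abs_mul, abs_of_nonneg (by positivity)]
  exact (mul_le_of_le_one_left (abs_nonneg _) (natCast_div_add_one_lt_one n).le).trans htrunc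

lemma tendsto_truncContract (x : ℝ) : Tendsto (fun n => truncContract n x) atTop (𝓝 x) := by
  have hcontract : Tendsto (fun n : ℕ => (n / (n + 1) : ℝ) * x) atTop (𝓝 x) := by
    simpa using (tendsto_natCast_div_add_atTop (1 : ℝ)).mul_const x
  refine hcontract.congr' ?_
  filter_upwards [tendsto_natCast_atTop_atTop.eventually_ge_atTop |x|] with n hn
  rw [truncContract, min_eq_left (abs_le.1 hn).2, max_eq_right (abs_le.1 hn).1]

variable {ε l r : ℝ} {φ : ℝ → ℝ}

lemma tendsto_intervalIntegral_comp_truncContract {F E : ℝ → ℝ} (hF : Continuous F)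
    (hφ : IntervalIntegrable φ volume l r) (hbound : ∀ n x, |F (truncContract n x)| ≤ E x)
    (hE : IntervalIntegrable (fun t => E (φ t)) volume l r) :
    Tendsto (fun n => ∫ t in l..r, F (truncContract n (φ t))) atTop
      (𝓝 (∫ t in l..r, F (φ t))) := by
  refine intervalIntegral.tendsto_integral_filter_of_dominated_convergence _
    (.of_forall fun n => ?_) (.of_forall fun n => .of_forall fun t _ => hbound n _) hE
    (.of_forall fun t _ => (hF.tendsto _).comp (tendsto_truncContract _))
  exact (hF.comp (lipschitzWith_truncContract n).continuous).comp_aestronglyMeasurable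
    hφ.def'.aestronglyMeasurable

lemma memBMOe.comp_truncContract (hφ : memBMOe ε l r φ) (n : ℕ) :
    memBMOe (n / (n + 1) * ε) l r fun t => truncContract n (φ t) := by
  simpa using hφ.comp_lipschitz (lipschitzWith_truncContract n)

lemma sq_natCast_div_mul_lt (hε : 0 < ε) (n : ℕ) : (n / (n + 1) * ε) ^ 2 < ε ^ 2 :=
  pow_lt_pow_left₀ (mul_lt_of_lt_one_left hε (natCast_div_add_one_lt_one n)) (by positivity)
    two_ne_zero

lemma memBMOe.tendsto_bellmanPoint_truncContract (hφ : memBMOe ε l r φ) (hε : 0 < ε)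
    (hlr : l < r) :
    Tendsto (fun n => bellmanPoint (fun t => truncContract n (φ t)) l r) atTop
      (𝓝[parabStrip ε] bellmanPoint φ l r) := by
  have hint := hφ.intervalIntegrable hlr.le
  refine tendsto_nhdsWithin_iff.2 ⟨Tendsto.prodMk_nhds (Tendsto.div_const ?_ _)
    (Tendsto.div_const ?_ _), .of_forall fun n => ?_⟩
  · exact tendsto_intervalIntegral_comp_truncContract continuous_id hint
      abs_truncContract_le_abs hint.abs
  · refine tendsto_intervalIntegral_comp_truncContract (E := fun x => x ^ 2)
      (continuous_id.pow 2) hint (fun n x => ?_) (hφ.intervalIntegrable_sq hlr.le)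
    rw [Pi.pow_apply, id, abs_sq]
    exact sq_le_sq.2 (abs_truncContract_le_abs n x)
  · exact parabStrip_subset (sq_natCast_div_mul_lt hε n).le
      ((hφ.comp_truncContract n).bellmanPoint_mem hlr)

lemma LocallyConcaveOn.integral_truncContract_le {G : ℝ × ℝ → ℝ}
    (hG : LocallyConcaveOn (parabStrip ε) G) (hGcont : ContinuousOn G (parabStrip ε))
    (hφ : memBMOe ε l r φ) (hε : 0 < ε) (hlr : l < r) (n : ℕ) :
    ∫ t in l..r, G (truncContract n (φ t), truncContract n (φ t) ^ 2)
      ≤ (r - l) * G (bellmanPoint (fun t => truncContract n (φ t)) l r) :=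
  hG.integral_le_of_abs_le hGcont (hφ.comp_truncContract n) hlr hε (sq_natCast_div_mul_lt hε n)
    fun t => abs_truncContract_le n (φ t)

end Truncation

section ExponentialIntegrability

variable {ε ε₀ l r : ℝ} {φ : ℝ → ℝ}

lemma memBMOe.exists_setIntegral_exp_truncContract_le (hφ : memBMOe ε l r φ) (hε : 0 < ε)
    (hε1 : ε < 1) (hlr : l < r) :
    ∃ K, ∀ n, ∫ t in Ioo l r, exp (truncContract n (φ t)) ≤ K := by
  have hconv := ((continuous_expMajorant ε).tendsto _).comp
    ((hφ.tendsto_bellmanPoint_truncContract hε hlr).mono_right nhdsWithin_le_nhds)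
  obtain ⟨K, hK⟩ := hconv.bddAbove_range
  have hpos : 0 < (1 - ε) * exp ε := mul_pos (sub_pos.2 hε1) (exp_pos ε)
  refine ⟨(r - l) * K / ((1 - ε) * exp ε), fun n => ?_⟩
  have hle := (locallyConcaveOn_expMajorant ε).integral_truncContract_le
    (continuous_expMajorant ε).continuousOn hφ hε hlr n
  simp only [expMajorant_mk_sq hε.le] at hle
  rw [intervalIntegral.integral_const_mul, intervalIntegral.integral_of_le hlr.le,
    integral_Ioc_eq_integral_Ioo] at hle
  rw [le_div_iff₀' hpos]
  exact hle.trans (mul_le_mul_of_nonneg_left (hK ⟨n, rfl⟩) (sub_pos.2 hlr).le)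

theorem memBMOe.integrableOn_exp (hφ : memBMOe ε l r φ) (hε : 0 < ε) (hε1 : ε < 1)
    (hlr : l < r) : IntegrableOn (fun t => exp (φ t)) (Ioo l r) := by
  obtain ⟨K, hK⟩ := hφ.exists_setIntegral_exp_truncContract_le hε hε1 hlr
  have hmeas (n : ℕ) : AEStronglyMeasurable (fun t => exp (truncContract n (φ t)))
      (volume.restrict (Ioo l r)) :=
    (continuous_exp.comp (lipschitzWith_truncContract n).continuous).comp_aestronglyMeasurable
      hφ.1.aestronglyMeasurable
  have hint (n : ℕ) : IntegrableOn (fun t => exp (truncContract n (φ t))) (Ioo l r) := by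
    refine Integrable.of_bound (hmeas n) (exp n) (.of_forall fun t => ?_)
    rw [norm_eq_abs, abs_exp]
    exact exp_le_exp.2 (le_of_abs_le (abs_truncContract_le n (φ t)))
  have hlintegral (n : ℕ) :
      ∫⁻ t in Ioo l r, ‖exp (truncContract n (φ t))‖ₑ ≤ ENNReal.ofReal K := by
    rw [← ofReal_integral_norm_eq_lintegral_enorm (hint n)]
    simpa only [norm_eq_abs, abs_exp] using ENNReal.ofReal_le_ofReal (hK n)
  exact integrable_of_tendsto
    (.of_forall fun t => (continuous_exp.tendsto _).comp (tendsto_truncContract (φ t))) hmeas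
    (ne_top_of_le_ne_top ENNReal.ofReal_ne_top
      (liminf_le_of_frequently_le' (.of_forall hlintegral)))

lemma memBMOe.integrableOn_exp_abs_div (hφ : memBMOe ε l r φ) (hε : 0 < ε) (hεε₀ : ε < ε₀)
    (hlr : l < r) : IntegrableOn (fun t => exp (|φ t| / ε₀)) (Ioo l r) := by
  have hε₀ : 0 < ε₀ := hε.trans hεε₀
  have hlip : LipschitzWith (toNNReal ε₀⁻¹) fun x : ℝ => |x| / ε₀ := by
    refine LipschitzWith.of_dist_le_mul fun x y => ?_
    rw [coe_toNNReal _ (by positivity), dist_eq, dist_eq, ← sub_div, abs_div, abs_of_pos hε₀,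
      div_eq_inv_mul]
    exact mul_le_mul_of_nonneg_left (abs_abs_sub_abs_le_abs_sub x y) (by positivity)
  have hcomp := hφ.comp_lipschitz hlip
  rw [coe_toNNReal _ (by positivity)] at hcomp
  exact hcomp.integrableOn_exp (by positivity) ((inv_mul_lt_one₀ hε₀).2 hεε₀) hlr

lemma memBMOe.integrableOn_comp {f : ℝ → ℝ} {C : ℝ} (hφ : memBMOe ε l r φ) (hε : 0 < ε)
    (hεε₀ : ε < ε₀) (hlr : l < r) (hf : Continuous f) (hfC : ∀ u, |f u| ≤ C * exp (|u| / ε₀)) :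
    IntegrableOn (fun t => f (φ t)) (Ioo l r) :=
  ((hφ.integrableOn_exp_abs_div hε hεε₀ hlr).const_mul C).mono'
    (hf.comp_aestronglyMeasurable hφ.1.aestronglyMeasurable) (.of_forall fun t => hfC (φ t))

theorem LocallyConcaveOn.intAvg_comp_le {G : ℝ × ℝ → ℝ} {f : ℝ → ℝ} {C : ℝ}
    (hG : LocallyConcaveOn (parabStrip ε) G) (hGcont : ContinuousOn G (parabStrip ε))
    (hGbd : ∀ u, G (u, u ^ 2) = f u) (hφ : memBMOe ε l r φ) (hε : 0 < ε) (hεε₀ : ε < ε₀)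
    (hlr : l < r) (hfC : ∀ u, |f u| ≤ C * exp (|u| / ε₀)) :
    intAvg (fun t => f (φ t)) l r ≤ G (bellmanPoint φ l r) := by
  have hε₀ : 0 < ε₀ := hε.trans hεε₀
  have hC : 0 ≤ C := by simpa using (abs_nonneg _).trans (hfC 0)
  have hdom (n : ℕ) (x : ℝ) : |f (truncContract n x)| ≤ C * exp (|x| / ε₀) := by
    refine (hfC _).trans ?_
    gcongr C * exp (?_ / ε₀)
    exact abs_truncContract_le_abs n x
  have hleft := tendsto_intervalIntegral_comp_truncContract
    (continuous_of_eq_on_parabola hGcont hGbd) (hφ.intervalIntegrable hlr.le) hdom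
    ((intervalIntegrable_iff_integrableOn_Ioo_of_le hlr.le).2
      ((hφ.integrableOn_exp_abs_div hε hεε₀ hlr).const_mul C))
  have hright := ((hGcont _ (hφ.bellmanPoint_mem hlr)).tendsto.comp
    (hφ.tendsto_bellmanPoint_truncContract hε hlr)).const_mul (r - l)
  rw [intAvg, div_le_iff₀' (sub_pos.2 hlr)]
  refine le_of_tendsto_of_tendsto' hleft hright fun n => ?_
  simpa only [hGbd, Function.comp_apply] using hG.integral_truncContract_le hGcont hφ hε hlr n

end ExponentialIntegrability

section Growth

variable {ε₀ : ℝ} {f : ℝ → ℝ}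

lemma exists_abs_le_mul_exp_of_nonneg (hf : Differentiable ℝ f)
    (hint : Integrable fun t => f t * exp (-|t| / ε₀))
    (hint' : Integrable fun t => deriv f t * exp (-|t| / ε₀)) :
    ∃ C, ∀ t, 0 ≤ t → |f t| ≤ C * exp (|t| / ε₀) := by
  set B : ℝ → ℝ := fun t => ‖deriv f t * exp (-|t| / ε₀) - ε₀⁻¹ * (f t * exp (-|t| / ε₀))‖ with hB
  have hBint : Integrable B := (hint'.sub (hint.const_mul _)).norm
  have hderiv (t : ℝ) : HasDerivAt (fun t => f t * exp (-t / ε₀))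
      (deriv f t * exp (-t / ε₀) - ε₀⁻¹ * (f t * exp (-t / ε₀))) t :=
    ((hf t).hasDerivAt.mul ((hasDerivAt_neg t).div_const ε₀).exp).congr_deriv (by ring)
  have hdiff : Differentiable ℝ fun t => f t * exp (-t / ε₀) :=
    fun t => (hderiv t).differentiableAt
  refine ⟨|f 0| + ∫ t, B t, fun t ht => ?_⟩
  have hvariation : |f t * exp (-t / ε₀) - f 0| ≤ ∫ t, B t := calc
    |f t * exp (-t / ε₀) - f 0| ≤ ∫ s in 0..t, B s := by
      have hle := norm_sub_le_integral_of_norm_deriv_le_of_le ht hdiff.continuous.continuousOn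
        hdiff.differentiableOn (.of_forall fun s hs => ?_) hBint.intervalIntegrable
      · simpa using hle
      · simp only [(hderiv s).deriv, hB, abs_of_pos hs.1, le_refl]
    _ ≤ ∫ s, B s := by
      rw [intervalIntegral.integral_of_le ht]
      exact setIntegral_le_integral hBint (.of_forall fun s => norm_nonneg _)
  have habs : |f t| * exp (-t / ε₀) ≤ |f 0| + ∫ t, B t := by
    have htri := abs_sub_abs_le_abs_sub (f t * exp (-t / ε₀)) (f 0)
    rw [abs_mul, abs_exp] at htri
    linarith
  rwa [abs_of_nonneg ht, ← div_le_iff₀ (exp_pos _), div_eq_mul_inv, ← exp_neg, ← neg_div]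

lemma exists_abs_le_mul_exp (hf : Differentiable ℝ f)
    (hint : Integrable fun t => f t * exp (-|t| / ε₀))
    (hint' : Integrable fun t => deriv f t * exp (-|t| / ε₀)) :
    ∃ C, ∀ t, |f t| ≤ C * exp (|t| / ε₀) := by
  obtain ⟨C₁, hC₁⟩ := exists_abs_le_mul_exp_of_nonneg hf hint hint'
  obtain ⟨C₂, hC₂⟩ := exists_abs_le_mul_exp_of_nonneg (f := fun t => f (-t)) (ε₀ := ε₀)
    (hf.comp differentiable_neg) (by simpa using hint.comp_neg)
    (by simpa [deriv_comp_neg] using hint'.comp_neg.neg)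
  refine ⟨max C₁ C₂, fun t => ?_⟩
  rcases le_total 0 t with ht | ht
  · exact (hC₁ t ht).trans (by gcongr; exact le_max_left _ _)
  · refine (hC₂ (-t) (neg_nonneg.2 ht)).trans' (by simp) |>.trans ?_
    rw [abs_neg]
    gcongr
    exact le_max_right _ _

end Growth

section TestFunction

variable {ε l r : ℝ}

lemma memBMOe_of_abs_sub_eq {φ : ℝ → ℝ} {m δ : ℝ} (hφ : IntegrableOn φ (Ioo l r))
    (hdev : ∀ t, |φ t - m| = δ) (hδ : δ ^ 2 ≤ ε ^ 2) : memBMOe ε l r φ := by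
  have hdevsq (t : ℝ) : (φ t - m) ^ 2 = δ ^ 2 := by rw [← sq_abs, hdev]
  have hsq : (fun t => φ t ^ 2) = fun t => 2 * m * φ t + (δ ^ 2 - m ^ 2) := by
    ext t
    linear_combination hdevsq t
  have hφsq : IntegrableOn (fun t => φ t ^ 2) (Ioo l r) := by
    rw [hsq]
    exact (hφ.const_mul (2 * m)).add (integrable_const _)
  refine ⟨hφ, hφsq, fun c d hlc hcd hdr => ?_⟩
  have hii {g : ℝ → ℝ} (hg : IntegrableOn g (Ioo l r)) : IntervalIntegrable g volume c d :=
    (intervalIntegrable_iff_integrableOn_Ioo_of_le hcd.le).2 (hg.mono_set (Ioo_subset_Ioo hlc hdr))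
  calc height (bellmanPoint φ c d) ≤ intAvg (fun t => (φ t - m) ^ 2) c d :=
        height_bellmanPoint_le hcd (hii hφ) (hii hφsq) m
    _ = δ ^ 2 := by simp only [hdevsq, intAvg_const hcd]
    _ ≤ ε ^ 2 := hδ

-- The witness takes the values `x.1 ± √(height x)` on the two halves of the interval.
lemma exists_memBMOe_bellmanPoint_eq {x : ℝ × ℝ} (hlr : l < r) (hx : x ∈ parabStrip ε) :
    ∃ φ, memBMOe ε l r φ ∧ bellmanPoint φ l r = x := by
  obtain ⟨hx0, hxε⟩ := mem_parabStrip_iff.1 hx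
  set δ := √(height x)
  have hδ : δ ^ 2 = height x := sq_sqrt hx0
  set φ := (Iic ((l + r) / 2)).piecewise (fun _ => x.1 - δ) fun _ => x.1 + δ with hφdef
  have hdev (t : ℝ) : |φ t - x.1| = δ := by
    simp only [hφdef, piecewise]
    split_ifs <;> simp [δ]
  have hint : IntervalIntegrable φ volume l r :=
    intervalIntegrable_piecewise_Iic (by linarith) (by linarith) intervalIntegrable_const
      intervalIntegrable_const
  have hmean : intAvg φ l r = x.1 := by
    rw [intAvg, integral_piecewise_Iic (by linarith) (by linarith) intervalIntegrable_const
      intervalIntegrable_const, div_eq_iff (sub_pos.2 hlr).ne']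
    simp only [intervalIntegral.integral_const, smul_eq_mul]
    ring
  have hφ : memBMOe ε l r φ := memBMOe_of_abs_sub_eq
    ((intervalIntegrable_iff_integrableOn_Ioo_of_le hlr.le).1 hint) hdev (hδ.trans_le hxε)
  have hvar := intAvg_sub_const_sq hlr hint (hφ.intervalIntegrable_sq hlr.le) x.1
  have hdevsq (t : ℝ) : (φ t - x.1) ^ 2 = height x := by rw [← sq_abs, hdev, hδ]
  simp only [hdevsq, intAvg_const hlr, hmean, sub_self, height, bellmanPoint] at hvar
  exact ⟨φ, hφ, Prod.ext hmean (by simp only [bellmanPoint]; linarith)⟩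

end TestFunction

theorem stmt4_general (ε ε₀ C : ℝ) (hε : 0 < ε) (hεε₀ : ε < ε₀) (f : ℝ → ℝ)
    (hfC : ∀ u, |f u| ≤ C * exp (|u| / ε₀)) (G : ℝ × ℝ → ℝ)
    (hGcont : ContinuousOn G (parabStrip ε))
    (hGconc : LocallyConcaveOn (parabStrip ε) G)
    (hGbd : ∀ u : ℝ, G (u, u ^ 2) = f u) :
    (∀ l r : ℝ, l < r → ∀ φ : ℝ → ℝ, memBMOe ε l r φ →
      IntegrableOn (fun t => f (φ t)) (Ioo l r) ∧
      intAvg (fun t => f (φ t)) l r ≤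
        G (intAvg φ l r, intAvg (fun t => (φ t) ^ 2) l r)) ∧
    (∀ x ∈ parabStrip ε, bellmanFn ε f x.1 x.2 ≤ G x) := by
  have hf := continuous_of_eq_on_parabola hGcont hGbd
  have hint {l r : ℝ} (hlr : l < r) {φ : ℝ → ℝ} (hφ : memBMOe ε l r φ) :
      IntegrableOn (fun t => f (φ t)) (Ioo l r) := hφ.integrableOn_comp hε hεε₀ hlr hf hfC
  have hle {l r : ℝ} (hlr : l < r) {φ : ℝ → ℝ} (hφ : memBMOe ε l r φ) :
      intAvg (fun t => f (φ t)) l r ≤ G (bellmanPoint φ l r) :=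
    hGconc.intAvg_comp_le hGcont hGbd hφ hε hεε₀ hlr hfC
  refine ⟨fun l r hlr φ hφ => ⟨hint hlr hφ, hle hlr hφ⟩, fun x hx => csSup_le ?_ ?_⟩
  · obtain ⟨φ, hφ, rfl⟩ := exists_memBMOe_bellmanPoint_eq one_pos hx
    exact ⟨_, φ, hφ, hint one_pos hφ, rfl, rfl, rfl⟩
  · rintro _ ⟨φ, hφ, -, h₁, h₂, rfl⟩
    simpa only [bellmanPoint, h₁, h₂] using hle one_pos hφ

theorem stmt4 (ε ε₀ : ℝ) (hε : 0 < ε) (hεε₀ : ε < ε₀) (f f3 : ℝ → ℝ)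
    (hf : memWcl ε₀ f f3) (G : ℝ × ℝ → ℝ)
    (hGcont : ContinuousOn G (parabStrip ε))
    (hGconc : LocallyConcaveOn (parabStrip ε) G)
    (hGbd : ∀ u : ℝ, G (u, u ^ 2) = f u) :
    (∀ l r : ℝ, l < r → ∀ φ : ℝ → ℝ, memBMOe ε l r φ →
      IntegrableOn (fun t => f (φ t)) (Ioo l r) ∧
      intAvg (fun t => f (φ t)) l r ≤
        G (intAvg φ l r, intAvg (fun t => (φ t) ^ 2) l r)) ∧
    (∀ x ∈ parabStrip ε, bellmanFn ε f x.1 x.2 ≤ G x) := by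
  obtain ⟨C, hC⟩ := exists_abs_le_mul_exp (hf.1.differentiable two_ne_zero) hf.2.2.1 hf.2.2.2.1
  exact stmt4_general ε ε₀ C hε hεε₀ f hC G hGcont hGconc hGbd
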